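/- arXiv:2009.00287 — 3 statements merged into one kernel-verified Lean document; each statement's English description precedes it below -/
import Mathlib

section
/- For all integers b ≥ 1, p ≥ 1 and α ≥ 0 with pα ≤ b, the separation number of the odd cycle C_{2p+1} satisfies sep(C_{2p+1}, 2b+α, b) = b + (p+1)α; that is, b + (p+1)α is the largest c ≤ 2b+α for which C_{2p+1} is (2b+α, b, c)-choosable. -/
open SimpleGraph Finset

/-- An `(L,b)`-coloring of `G`: each vertex `v` receives a set `φ v ⊆ L v` with
`|φ v| = b`, and adjacent vertices receive disjoint sets. -/
def IsLbColoring {V : Type*} (G : SimpleGraph V) (L : V → Finset ℕ) (b : ℕ)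
    (φ : V → Finset ℕ) : Prop :=
  (∀ v, φ v ⊆ L v ∧ (φ v).card = b) ∧ ∀ u v, G.Adj u v → φ u ∩ φ v = ∅

/-- `G` is `(a,b,c)`-choosable: every `c`-separating `a`-list assignment admits an
`(L,b)`-coloring. -/
def Choosable {V : Type*} (G : SimpleGraph V) (a b c : ℕ) : Prop :=
  ∀ L : V → Finset ℕ, (∀ v, (L v).card = a) →
    (∀ u v, G.Adj u v → (L u ∩ L v).card ≤ c) →
    ∃ φ, IsLbColoring G L b φ

/-- `G` is `(a,b,c)`-free-choosable: for every `c`-separating `a`-list assignment,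
any precoloring of one vertex by a `b`-subset of its list extends to an `(L,b)`-coloring. -/
def FreeChoosable {V : Type*} (G : SimpleGraph V) (a b c : ℕ) : Prop :=
  ∀ L : V → Finset ℕ, (∀ v, (L v).card = a) →
    (∀ u v, G.Adj u v → (L u ∩ L v).card ≤ c) →
    ∀ (v₀ : V) (C : Finset ℕ), C ⊆ L v₀ → C.card = b →
      ∃ φ, IsLbColoring G L b φ ∧ φ v₀ = C

/-- The separation number `sep(G,a,b)`: the largest `c ≤ a` such that `G` is
`(a,b,c)`-choosable. -/
noncomputable def sep {V : Type*} (G : SimpleGraph V) (a b : ℕ) : ℕ :=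
  sSup {c | c ≤ a ∧ Choosable G a b c}

/-- The free-separation number `fsep(G,a,b)`: the largest `c ≤ a` such that `G` is
`(a,b,c)`-free-choosable. -/
noncomputable def fsep {V : Type*} (G : SimpleGraph V) (a b : ℕ) : ℕ :=
  sSup {c | c ≤ a ∧ FreeChoosable G a b c}

/-- Along the cycle of `σ` through `z`, signs can be chosen to alternate, except possibly when
passing from `z` to `σ z`; the sign of `σ z` is prescribed. -/
lemma exists_alternating_sign {X : Type*} [Finite X] (σ : Equiv.Perm X) (z : X) (ε : ℤ)
    (hε : ε = 1 ∨ ε = -1) :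
    ∃ χ : X → ℤ, (∀ u, χ u = 1 ∨ χ u = -1) ∧ χ (σ z) = ε ∧
      ∀ u, σ.SameCycle z u → u ≠ z → χ (σ u) = -χ u := by
  classical
  cases nonempty_fintype X
  let idx : X → ℕ := fun u => sInf {t | σ^[t + 1] z = u}
  refine ⟨fun u => ε * (-1) ^ idx u, fun u => ?_, ?_, fun u hu hne => ?_⟩
  · rcases hε with rfl | rfl <;> rcases neg_one_pow_eq_or ℤ (idx u) with h | h <;> simp [h]
  · have : idx (σ z) = 0 := Nat.sInf_eq_zero.2 (Or.inl (by simp))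
    simp [this]
  · obtain ⟨k, hk0, -, hk⟩ := hu.exists_pow_eq σ
    have hmem : idx u ∈ {t | σ^[t + 1] z = u} := by
      refine Nat.sInf_mem ⟨k - 1, ?_⟩
      rw [Set.mem_ofPred_eq, Nat.sub_add_cancel hk0, Equiv.Perm.iterate_eq_pow, hk]
    have hidx : idx (σ u) = idx u + 1 := by
      refine le_antisymm (Nat.sInf_le ?_) (le_csInf ⟨idx u + 1, ?_⟩ ?_)
      · rw [Set.mem_ofPred_eq, Function.iterate_succ_apply', hmem]
      · rw [Set.mem_ofPred_eq, Function.iterate_succ_apply', hmem]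
      · rintro s hs
        rw [Set.mem_ofPred_eq, Function.iterate_succ_apply'] at hs
        have hs := σ.injective hs
        cases s with
        | zero => exact absurd hs.symm hne
        | succ s => exact Nat.succ_le_succ (Nat.sInf_le hs)
    simp only [hidx, pow_succ]
    ring

section Rotation

variable {X V : Type*} [Fintype X] [DecidableEq X] [DecidableEq V]

/-- Signs on a `σ`-invariant set `S`, alternating along `σ` up to controlled defects: no element
outside `B` is positive together with its successor, and the defects cancel in all fibres of `ℓ`
but at most one, where they leave one excess positive pair. -/
lemma exists_signs_on_invariant (σ : Equiv.Perm X) (r : V → V) (ℓ : X → V)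
    (hℓ : ∀ u, ℓ (σ u) = r (ℓ u)) (hr : ∀ v w, ∃ k : ℕ, r^[k] v = w) (B : Set X)
    (hB : ∀ u, ∃ k : ℕ, σ^[k] u ∈ B) (S : Finset X) (hS : ∀ u, σ u ∈ S ↔ u ∈ S) :
    ∃ χ : X → ℤ, (∀ u, χ u = 1 ∨ χ u = -1) ∧
      (∀ u ∈ S, u ∉ B → ¬ (χ u = 1 ∧ χ (σ u) = 1)) ∧
      ((∀ v, ∑ u ∈ S with ℓ u = v, (χ u + χ (σ u)) = 0) ∨
        ∃ v₀, ∀ v, ∑ u ∈ S with ℓ u = v, (χ u + χ (σ u)) = if v = v₀ then 2 else 0) := by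
  induction S using Finset.strongInduction with
  | H S ih =>
  rcases S.eq_empty_or_nonempty with rfl | ⟨x, hx⟩
  · exact ⟨fun _ => 1, by simp⟩
  classical
  set O : Finset X := univ.filter fun u => σ.SameCycle x u with hOdef
  have hO : ∀ u, σ u ∈ O ↔ u ∈ O := by simp [hOdef]
  have hiter : ∀ k, σ^[k] x ∈ O := fun k => by
    simp [hOdef, Equiv.Perm.iterate_eq_pow, Equiv.Perm.SameCycle.refl]
  have hOS : O ⊆ S := by
    intro u hu
    obtain ⟨k, -, -, rfl⟩ := (mem_filter.1 hu).2.exists_pow_eq σ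
    rw [← Equiv.Perm.iterate_eq_pow]
    clear hu
    induction k with
    | zero => exact hx
    | succ k ih => rw [Function.iterate_succ_apply']; exact (hS _).2 ih
  obtain ⟨χ₁, hχ₁, hind₁, hdef₁⟩ := ih (S \ O)
    (sdiff_ssubset hOS ⟨x, hiter 0⟩) (fun u => by simp [hS, hO])
  have hglue : ∀ z ∈ O, ∀ ε : ℤ, (ε = 1 ∨ ε = -1) → (ε = 1 → z ∈ B) →
      ∃ χ : X → ℤ, (∀ u, χ u = 1 ∨ χ u = -1) ∧
        (∀ u ∈ S, u ∉ B → ¬ (χ u = 1 ∧ χ (σ u) = 1)) ∧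
        ((∀ v, ∑ u ∈ S with ℓ u = v, (χ u + χ (σ u)) =
            ∑ u ∈ S \ O with ℓ u = v, (χ₁ u + χ₁ (σ u))) ∨
          ∀ v, ∑ u ∈ S with ℓ u = v, (χ u + χ (σ u)) =
            (∑ u ∈ S \ O with ℓ u = v, (χ₁ u + χ₁ (σ u))) + if v = ℓ z then 2 * ε else 0) := by
    intro z hz ε hε hzB
    obtain ⟨χ₂, hχ₂, hz₂, halt⟩ := exists_alternating_sign σ z ε hε
    have halt' : ∀ u ∈ O, u ≠ z → χ₂ (σ u) = -χ₂ u := fun u hu hne =>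
      halt u ((mem_filter.1 hz).2.symm.trans (mem_filter.1 hu).2) hne
    let χ : X → ℤ := fun u => if u ∈ O then χ₂ u else χ₁ u
    have hin : ∀ u ∈ O, χ u = χ₂ u ∧ χ (σ u) = χ₂ (σ u) := fun u hu => by
      simp [χ, hO, hu]
    have hout : ∀ u, u ∉ O → χ u = χ₁ u ∧ χ (σ u) = χ₁ (σ u) := fun u hu => by
      simp [χ, hO, hu]
    have hsum : ∀ v, ∑ u ∈ S with ℓ u = v, (χ u + χ (σ u)) =
        (∑ u ∈ S \ O with ℓ u = v, (χ₁ u + χ₁ (σ u))) +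
          if v = ℓ z then χ₂ z + ε else 0 := by
      intro v
      rw [sum_filter, sum_filter, ← sum_sdiff hOS]
      congr 1
      · refine sum_congr rfl fun u hu => ?_
        obtain ⟨h1, h2⟩ := hout u (mem_sdiff.1 hu).2
        rw [h1, h2]
      · rw [sum_eq_single_of_mem z hz]
        · simp [hin z hz, hz₂, eq_comm]
        · intro u hu hne
          simp [hin u hu, halt' u hu hne]
    refine ⟨χ, fun u => ?_, fun u hu huB => ?_, ?_⟩
    · by_cases hu : u ∈ O
      · rw [(hin u hu).1]; exact hχ₂ u
      · rw [(hout u hu).1]; exact hχ₁ u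
    · by_cases huO : u ∈ O
      · rw [(hin u huO).1, (hin u huO).2]
        rintro ⟨h1, h2⟩
        by_cases huz : u = z
        · subst huz
          exact huB (hzB (hz₂.symm.trans h2))
        · have := halt' u huO huz
          omega
      · rw [(hout u huO).1, (hout u huO).2]
        exact hind₁ u (mem_sdiff.2 ⟨hu, huO⟩) huB
    · have : χ₂ z = -ε ∨ χ₂ z = ε := by
        rcases hχ₂ z with h | h <;> rcases hε with h' | h' <;> simp [h, h']
      rcases this with h | h
      · left; intro v; rw [hsum v, h]; simp
      · right; intro v; rw [hsum v, h, two_mul]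
  rcases hdef₁ with hzero | ⟨v₀, hv₀⟩
  · obtain ⟨k, hk⟩ := hB x
    obtain ⟨χ, h1, h2, h3⟩ := hglue _ (hiter k) 1 (Or.inl rfl) (fun _ => hk)
    refine ⟨χ, h1, h2, h3.imp (fun h v => (h v).trans (hzero v)) fun h =>
      ⟨ℓ (σ^[k] x), fun v => ?_⟩⟩
    rw [h v, hzero v, zero_add, mul_one]
  · obtain ⟨k, hk⟩ := hr (ℓ x) v₀
    have hℓk : ∀ k, ℓ (σ^[k] x) = r^[k] (ℓ x) := fun k => by
      induction k with
      | zero => rfl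
      | succ k ih => rw [Function.iterate_succ_apply', Function.iterate_succ_apply', hℓ, ih]
    obtain ⟨χ, h1, h2, h3⟩ := hglue _ (hiter k) (-1) (Or.inr rfl) (fun h => by norm_num at h)
    refine ⟨χ, h1, h2, h3.symm.imp (fun h v => ?_) fun h => ⟨v₀, fun v => (h v).trans (hv₀ v)⟩⟩
    rw [h v, hv₀ v, hℓk, hk]
    split_ifs <;> norm_num

/-- If `σ` lifts an odd rotation `r` and every `σ`-cycle meets `B`, then there are signs balanced
on every fibre, for which no element outside `B` is positive together with its successor. -/
lemma exists_balanced_signs [Fintype V] (σ : Equiv.Perm X) (r : V → V) (ℓ : X → V)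
    (hℓ : ∀ u, ℓ (σ u) = r (ℓ u)) (hr : ∀ v w, ∃ k : ℕ, r^[k] v = w)
    (hinj : Function.Injective r) {N : ℕ} (hN : Odd N)
    (hrN : ∀ v, r^[N] v = v) (B : Set X) (hB : ∀ u, ∃ k : ℕ, σ^[k] u ∈ B)
    (hX : Even (Fintype.card X)) :
    ∃ χ : X → ℤ, (∀ u, χ u = 1 ∨ χ u = -1) ∧ (∀ u, u ∉ B → ¬ (χ u = 1 ∧ χ (σ u) = 1)) ∧
      ∀ v, ∑ u with ℓ u = v, χ u = 0 := by
  obtain ⟨χ, h1, h2, h3⟩ := exists_signs_on_invariant σ r ℓ hℓ hr B hB univ (by simp)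
  refine ⟨χ, h1, fun u => h2 u (mem_univ u), ?_⟩
  rcases h3 with h3 | ⟨v₀, h3⟩
  · have hstep : ∀ v, ∑ u with ℓ u = r v, χ u = -∑ u with ℓ u = v, χ u := by
      intro v
      rw [eq_neg_iff_add_eq_zero, add_comm, ← h3 v, sum_add_distrib]
      congr 1
      refine (sum_equiv σ (fun u => ?_) fun _ _ => rfl).symm
      simp [hℓ, hinj.eq_iff]
    have hiter : ∀ (k : ℕ) v, ∑ u with ℓ u = r^[k] v, χ u =
        (-1) ^ k * ∑ u with ℓ u = v, χ u := by
      intro k v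
      induction k with
      | zero => rw [pow_zero, one_mul]; rfl
      | succ k ih => rw [Function.iterate_succ_apply', hstep, ih, pow_succ]; ring
    intro v
    have := hiter N v
    rw [hrN, hN.neg_one_pow] at this
    omega
  · exfalso
    have htot : ∑ u, (χ u + χ (σ u)) = 2 := by
      rw [← sum_fiberwise univ ℓ, sum_congr rfl fun v _ => h3 v]
      simp
    rw [sum_add_distrib, Equiv.sum_comp σ χ] at htot
    have hpar : Even (∑ u, (χ u - 1)) := by
      refine even_sum _ fun u _ => ?_
      rcases h1 u with h | h <;> simp [h]
    rw [sum_sub_distrib] at hpar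
    have hcard : Even (∑ _u : X, (1 : ℤ)) := by simpa using hX
    have := (hpar.add hcard)
    rw [sub_add_cancel, show ∑ u, χ u = 1 by omega] at this
    norm_num at this

end Rotation

lemma cycleGraph_adj_iff_succ {p : ℕ} (hp : 1 ≤ p) (u v : Fin (2 * p + 1)) :
    (cycleGraph (2 * p + 1)).Adj u v ↔ v = u + 1 ∨ u = v + 1 := by
  have h01 : (0 : Fin (2 * p + 1)) ≠ 1 := by
    rw [Ne, Fin.ext_iff, Fin.val_zero, Fin.val_one', Nat.mod_eq_of_lt (by omega)]
    omega
  rw [cycleGraph_eq_circulantGraph, circulantGraph_adj, Set.mem_singleton_iff,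
    Set.mem_singleton_iff, sub_eq_iff_eq_add', sub_eq_iff_eq_add', add_comm v, add_comm u, or_comm]
  refine and_iff_right_of_imp ?_
  rintro (rfl | rfl) h <;> simp_all

lemma fin_succ_iterate_val {p : ℕ} (v : Fin (2 * p + 1)) (k : ℕ) :
    ((· + 1)^[k] v).val = (v.val + k) % (2 * p + 1) := by
  induction k with
  | zero => simp [Nat.mod_eq_of_lt v.isLt]
  | succ k ih =>
    rw [Function.iterate_succ_apply', Fin.val_add, ih, Fin.val_one']
    simp [add_assoc]

lemma fin_exists_succ_iterate {p : ℕ} (v w : Fin (2 * p + 1)) :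
    ∃ k : ℕ, (· + 1)^[k] v = w := by
  refine ⟨2 * p + 1 - v.val + w.val, Fin.ext ?_⟩
  have := v.isLt
  rw [fin_succ_iterate_val, show v.val + (2 * p + 1 - v.val + w.val) = w.val + (2 * p + 1) by omega,
    Nat.add_mod_right, Nat.mod_eq_of_lt w.isLt]

/-- An odd cycle whose lists have at least `2b` colors, no color being common to all lists,
has a `b`-fold coloring. -/
lemma exists_coloring_of_no_common_color {p b : ℕ} (hp : 1 ≤ p) (L : Fin (2 * p + 1) → Finset ℕ)
    (hL : ∀ v, 2 * b ≤ (L v).card) (hcommon : ∀ x, ∃ v, x ∉ L v) :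
    ∃ φ, IsLbColoring (cycleGraph (2 * p + 1)) L b φ := by
  choose M hML hM using fun v => exists_subset_card_eq (hL v)
  have hext : ∀ v, ∃ g : M v ≃ M (v + 1), ∀ x : M v, (x : ℕ) ∈ M (v + 1) → (g x : ℕ) = x := by
    intro v
    obtain ⟨g, hg⟩ := Finset.exists_equiv_extend_of_card_eq (α := M v) (t := M (v + 1))
      (by simp [hM]) (s := univ.filter fun x : M v => (x : ℕ) ∈ M (v + 1)) (f := Subtype.val)
      (by intro x; simp +contextual) Subtype.val_injective.injOn
    exact ⟨g, fun x hx => hg x (by simpa using hx)⟩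
  choose g hg using hext
  let σ : Equiv.Perm (Σ v, M v) := Equiv.sigmaCongr (Equiv.addRight 1) g
  have hσ : ∀ v x, σ ⟨v, x⟩ = ⟨v + 1, g v x⟩ := fun _ _ => rfl
  let B : Set (Σ v, M v) := {u | (u.2 : ℕ) ∉ M (u.1 + 1)}
  have hstay : ∀ u : Σ v, M v, u ∉ B → (σ u).1 = u.1 + 1 ∧ ((σ u).2 : ℕ) = u.2 := by
    rintro ⟨v, x⟩ hu
    exact ⟨rfl, hg v x (not_not.1 hu)⟩
  have hB : ∀ u, ∃ k : ℕ, σ^[k] u ∈ B := by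
    intro u
    by_contra! hno
    have hiter : ∀ k : ℕ, (σ^[k] u).1 = (· + 1)^[k] u.1 ∧ ((σ^[k] u).2 : ℕ) = u.2 := by
      intro k
      induction k with
      | zero => exact ⟨rfl, rfl⟩
      | succ k ih =>
        rw [Function.iterate_succ_apply', Function.iterate_succ_apply']
        obtain ⟨h1, h2⟩ := hstay _ (hno k)
        exact ⟨h1.trans (by rw [ih.1]), h2.trans ih.2⟩
    obtain ⟨v, hv⟩ := hcommon u.2
    obtain ⟨k, hk⟩ := fin_exists_succ_iterate u.1 v
    obtain ⟨h1, h2⟩ := hiter k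
    apply hv
    rw [← h2, ← hk, ← h1]
    exact hML _ (σ^[k] u).2.2
  obtain ⟨χ, hχ, hind, hbal⟩ := exists_balanced_signs σ (· + 1) Sigma.fst (fun _ => rfl)
    fin_exists_succ_iterate (add_left_injective 1) (odd_two_mul_add_one p)
    (fun v => Fin.ext (by
      rw [fin_succ_iterate_val, Nat.add_mod_right, Nat.mod_eq_of_lt v.isLt])) B hB
    (by simp [hM])
  let T : ∀ v, Finset (M v) := fun v => univ.filter fun x => χ ⟨v, x⟩ = 1
  refine ⟨fun v => (T v).map (Function.Embedding.subtype _), fun v => ⟨?_, ?_⟩, ?_⟩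
  · intro x hx
    obtain ⟨y, -, rfl⟩ := mem_map.1 hx
    exact hML v y.2
  · rw [card_map]
    have h0 : ∑ x : M v, χ ⟨v, x⟩ = 0 := by
      rw [← hbal v]
      refine sum_bij (fun x _ => ⟨v, x⟩) (by simp) (by simp) ?_ (by simp)
      rintro ⟨w, x⟩ h
      obtain rfl : w = v := by simpa using h
      exact ⟨x, mem_univ _, rfl⟩
    have h1 : ∑ x : M v, (χ ⟨v, x⟩ + 1) = ∑ x : M v, if χ ⟨v, x⟩ = 1 then 2 else 0 := by
      refine sum_congr rfl fun x _ => ?_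
      rcases hχ ⟨v, x⟩ with h | h <;> simp [h]
    rw [sum_add_distrib, h0, ← sum_filter] at h1
    simp only [sum_const, card_univ, Fintype.card_coe, hM, nsmul_eq_mul, mul_one, zero_add,
      Nat.cast_mul, Nat.cast_ofNat] at h1
    simp only [T]
    omega
  · have key : ∀ v, (T v).map (Function.Embedding.subtype _) ∩
        (T (v + 1)).map (Function.Embedding.subtype _) = ∅ := by
      intro v
      rw [← disjoint_iff_inter_eq_empty, Finset.disjoint_left]
      intro x hx hx'
      obtain ⟨y, hy, rfl⟩ := mem_map.1 hx
      obtain ⟨y', hy', hyy'⟩ := mem_map.1 hx'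
      have hmem : (y : ℕ) ∈ M (v + 1) := by
        rw [← show (y' : ℕ) = y from hyy']; exact y'.2
      have hgy : g v y = y' := Subtype.ext ((hg v y hmem).trans hyy'.symm)
      refine hind ⟨v, y⟩ (not_not.2 hmem) ⟨(mem_filter.1 hy).2, ?_⟩
      rw [hσ, hgy]
      exact (mem_filter.1 hy').2
    intro u v huv
    rcases (cycleGraph_adj_iff_succ hp u v).1 huv with rfl | rfl
    · exact key u
    · rw [inter_comm]; exact key v

/-- An odd cycle `C_{2p+1}` whose lists have at least `2b + α` colors, at most `(2p+1)α` of them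
being common to all lists, has a `b`-fold coloring. -/
lemma exists_coloring_of_few_common_colors {p b α : ℕ} (hp : 1 ≤ p)
    (L : Fin (2 * p + 1) → Finset ℕ) (hL : ∀ v, 2 * b + α ≤ (L v).card) (F : Finset ℕ)
    (hF : ∀ x, (∀ v, x ∈ L v) → x ∈ F) (hFcard : F.card ≤ (2 * p + 1) * α) :
    ∃ φ, IsLbColoring (cycleGraph (2 * p + 1)) L b φ := by
  obtain ⟨f⟩ : Nonempty (F ↪ Fin (2 * p + 1) × Fin α) :=
    Function.Embedding.nonempty_of_card_le (by simpa using hFcard)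
  let D : Fin (2 * p + 1) → Finset ℕ := fun v =>
    (univ.filter fun x : F => (f x).1 = v).map (Function.Embedding.subtype _)
  have hD : ∀ v, (D v).card ≤ α := by
    intro v
    rw [card_map]
    refine (card_le_card_of_injOn (t := univ) (fun x => (f x).2) (by simp) ?_).trans (by simp)
    intro x hx y hy hxy
    refine f.injective (Prod.ext ?_ hxy)
    rw [(mem_filter.1 hx).2, (mem_filter.1 hy).2]
  obtain ⟨φ, hφ, hdisj⟩ := exists_coloring_of_no_common_color (b := b) hp (fun v => L v \ D v)
    (fun v => by
      have := le_card_sdiff (D v) (L v)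
      have := hL v
      have := hD v
      omega)
    (fun x => by
      by_contra! h
      have hx : x ∈ F := hF x fun v => (mem_sdiff.1 (h v)).1
      exact (mem_sdiff.1 (h (f ⟨x, hx⟩).1)).2
        (mem_map.2 ⟨⟨x, hx⟩, by simp, rfl⟩))
  exact ⟨φ, fun v => ⟨(hφ v).1.trans sdiff_subset, (hφ v).2⟩, hdisj⟩

lemma choosable_odd_cycle {b p α : ℕ} (hp : 1 ≤ p) :
    Choosable (cycleGraph (2 * p + 1)) (2 * b + α) b (b + (p + 1) * α) := by
  intro L hL hsep
  have hsucc : ∀ v, (L v ∩ L (v + 1)).card ≤ b + (p + 1) * α := fun v =>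
    hsep _ _ ((cycleGraph_adj_iff_succ hp _ _).2 (Or.inl rfl))
  have hpred : ∀ v, (L v ∩ L (v - 1)).card ≤ b + (p + 1) * α := fun v =>
    hsep _ _ ((cycleGraph_adj_iff_succ hp _ _).2 (Or.inr (by simp)))
  let F : Finset ℕ := (L 0).filter fun x => ∀ v, x ∈ L v
  have hFL : ∀ v, F ⊆ L v := fun v x hx => (mem_filter.1 hx).2 v
  have hmul : (2 * p + 1) * α = 2 * (p * α) + α := by ring
  have hmul' : (p + 1) * α = p * α + α := by ring
  have hFle : F.card ≤ b + (p + 1) * α :=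
    (card_le_card (subset_inter (hFL 0) (hFL (0 + 1)))).trans (hsucc 0)
  let s := F.card - (2 * p + 1) * α
  let S : Fin (2 * p + 1) → Finset ℕ := fun v => L v \ ((L v ∩ L (v + 1)) ∪ (L v ∩ L (v - 1)))
  have hS : ∀ v, s ≤ (S v).card := by
    intro v
    have h1 := card_union_add_card_inter (L v ∩ L (v + 1)) (L v ∩ L (v - 1))
    have h2 : F.card ≤ ((L v ∩ L (v + 1)) ∩ (L v ∩ L (v - 1))).card :=
      card_le_card (subset_inter (subset_inter (hFL _) (hFL _)) (subset_inter (hFL _) (hFL _)))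
    have h3 := le_card_sdiff ((L v ∩ L (v + 1)) ∪ (L v ∩ L (v - 1))) (L v)
    have := hsucc v
    have := hpred v
    have := hL v
    simp only [S, s]
    omega
  choose R hRS hR using fun v => exists_subset_card_eq (hS v)
  have hRL : ∀ v, R v ⊆ L v := fun v => (hRS v).trans sdiff_subset
  have hRout : ∀ v, ∀ x ∈ R v, x ∉ L (v + 1) ∧ x ∉ L (v - 1) := by
    intro v x hx
    have := hRS v hx
    simp only [S, mem_sdiff, mem_union, mem_inter] at this
    tauto
  have hsb : s ≤ b := by simp only [s]; omega
  obtain ⟨φ, hφ, hdisj⟩ := exists_coloring_of_few_common_colors (b := b - s) (α := α + s) hp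
    (fun v => L v \ R v)
    (fun v => by rw [card_sdiff_of_subset (hRL v), hL, hR]; omega) F
    (fun x hx => mem_filter.2 ⟨(mem_sdiff.1 (hx 0)).1, fun v => (mem_sdiff.1 (hx v)).1⟩)
    (by
      have : (2 * p + 1) * (α + s) = (2 * p + 1) * α + 2 * (p * s) + s := by ring
      have : s = F.card - (2 * p + 1) * α := rfl
      omega)
  have hφL : ∀ v, φ v ⊆ L v := fun v => (hφ v).1.trans sdiff_subset
  refine ⟨fun v => φ v ∪ R v, fun v => ⟨union_subset (hφL v) (hRL v), ?_⟩, ?_⟩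
  · rw [card_union_of_disjoint, (hφ v).2, hR, Nat.sub_add_cancel hsb]
    exact disjoint_of_subset_left (hφ v).1 sdiff_disjoint
  · have key : ∀ v, (φ v ∪ R v) ∩ (φ (v + 1) ∪ R (v + 1)) = ∅ := by
      intro v
      have hadj := hdisj v (v + 1) ((cycleGraph_adj_iff_succ hp _ _).2 (Or.inl rfl))
      rw [← disjoint_iff_inter_eq_empty, Finset.disjoint_left] at hadj ⊢
      intro x hx hx'
      have hback : x ∈ R (v + 1) → x ∉ L v := fun h => by
        simpa using (hRout (v + 1) x h).2
      rcases mem_union.1 hx with h | h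
      · rcases mem_union.1 hx' with h' | h'
        · exact hadj h h'
        · exact hback h' (hφL v h)
      · refine (hRout v x h).1 ?_
        exact union_subset (hφL _) (hRL _) hx'
    intro u v huv
    rcases (cycleGraph_adj_iff_succ hp u v).1 huv with rfl | rfl
    · exact key u
    · rw [inter_comm]; exact key v

/-- A set of vertices of an odd cycle without two consecutive ones has at most `p` elements. -/
lemma card_le_of_no_consecutive {p : ℕ} (I : Finset (Fin (2 * p + 1)))
    (hI : ∀ v ∈ I, v + 1 ∉ I) : I.card ≤ p := by
  have hdisj : Disjoint I (I.map (addRightEmbedding 1)) := by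
    rw [Finset.disjoint_right]
    intro v hv
    obtain ⟨w, hw, rfl⟩ := mem_map.1 hv
    exact hI w hw
  have h1 := card_le_univ (I ∪ I.map (addRightEmbedding 1))
  rw [card_union_of_disjoint hdisj, card_map, Fintype.card_fin] at h1
  omega

lemma not_choosable_odd_cycle {b p α : ℕ} (hp : 1 ≤ p) (hα : p * α < b) :
    ¬ Choosable (cycleGraph (2 * p + 1)) (2 * b + α) b (b + (p + 1) * α + 1) := by
  intro hch
  obtain ⟨d, rfl⟩ : ∃ d, b = p * α + 1 + d := Nat.exists_eq_add_of_le hα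
  let m := (2 * p + 1) * α + 2
  let E : Fin (2 * p + 1) → Finset ℕ := fun e => Ico (m + e.val * d) (m + (e.val + 1) * d)
  have hEcard : ∀ e, (E e).card = d := fun e => by
    simp only [E, Nat.card_Ico, add_mul]; omega
  have hEE : ∀ {e e' x}, x ∈ E e → x ∈ E e' → e = e' := by
    intro e e' x hx hx'
    simp only [E, mem_Ico] at hx hx'
    refine Fin.ext (le_antisymm ?_ ?_)
    · exact Nat.lt_succ_iff.1 (lt_of_mul_lt_mul_right (show e.val * d < (e'.val + 1) * d by omega)
        (Nat.zero_le d))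
    · exact Nat.lt_succ_iff.1 (lt_of_mul_lt_mul_right (show e'.val * d < (e.val + 1) * d by omega)
        (Nat.zero_le d))
  have hEm : ∀ {e x}, x ∈ E e → m ≤ x ∧ x < m + (2 * p + 1) * d := by
    intro e x hx
    simp only [E, mem_Ico] at hx
    have : (e.val + 1) * d ≤ (2 * p + 1) * d := Nat.mul_le_mul_right d e.isLt
    exact ⟨by omega, by omega⟩
  have hval : (1 : Fin (2 * p + 1)).val = 1 := by
    rw [Fin.val_one', Nat.mod_eq_of_lt (by omega)]
  have h10 : (1 : Fin (2 * p + 1)) ≠ 0 := fun h => by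
    have := congrArg Fin.val h
    rw [hval] at this
    simp at this
  have h20 : (1 + 1 : Fin (2 * p + 1)) ≠ 0 := fun h => by
    have := congrArg Fin.val h
    rw [Fin.val_add, hval, Nat.mod_eq_of_lt (by omega)] at this
    simp at this
  let L : Fin (2 * p + 1) → Finset ℕ := fun v => range m ∪ (E v ∪ E (v - 1))
  have hL : ∀ v, (L v).card = 2 * (p * α + 1 + d) + α := by
    intro v
    have h1 : Disjoint (E v) (E (v - 1)) := by
      rw [Finset.disjoint_left]
      intro x hx hx'
      have := hEE hx hx'
      rw [eq_sub_iff_add_eq, add_eq_left] at this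
      exact h10 this
    have h2 : Disjoint (range m) (E v ∪ E (v - 1)) := by
      rw [Finset.disjoint_right]
      intro x hx
      rw [mem_range, not_lt]
      exact (mem_union.1 hx).elim (fun h => (hEm h).1) fun h => (hEm h).1
    rw [card_union_of_disjoint h2, card_union_of_disjoint h1, hEcard, hEcard, card_range]
    simp only [m]
    ring
  have hsucc : ∀ v, (L v ∩ L (v + 1)).card ≤ p * α + 1 + d + (p + 1) * α + 1 := by
    intro v
    have hsub : L v ∩ L (v + 1) ⊆ range m ∪ E v := by
      intro x hx
      simp only [L, mem_inter, mem_union, add_sub_cancel_right] at hx ⊢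
      obtain ⟨h | h | h, h' | h' | h'⟩ := hx
      · exact Or.inl h
      · exact Or.inl h
      · exact Or.inl h
      · exact Or.inl h'
      · exact Or.inr h
      · exact Or.inr h
      · exact Or.inl h'
      · have h3 := hEE h h'
        rw [sub_eq_iff_eq_add, add_assoc, left_eq_add] at h3
        exact absurd h3 h20
      · exact Or.inr h'
    refine (card_le_card hsub).trans ((card_union_le _ _).trans ?_)
    rw [hEcard, card_range]
    simp only [m]
    linarith
  obtain ⟨φ, hφ, hdisj⟩ := hch L hL (fun u v huv => by
    rcases (cycleGraph_adj_iff_succ hp u v).1 huv with rfl | rfl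
    · exact hsucc u
    · rw [inter_comm]; exact hsucc v)
  have hind : ∀ x v, x ∈ φ v → x ∉ φ (v + 1) := fun x v h h' => by
    have := hdisj v (v + 1) ((cycleGraph_adj_iff_succ hp _ _).2 (Or.inl rfl))
    simpa [this] using mem_inter.2 ⟨h, h'⟩
  let K : ℕ → Finset (Fin (2 * p + 1)) := fun x => univ.filter fun v => x ∈ φ v
  have hcommon : ∀ x, (K x).card ≤ p := fun x =>
    card_le_of_no_consecutive _ fun v hv hv' =>
      hind x v (mem_filter.1 hv).2 (mem_filter.1 hv').2
  have hlocal : ∀ x, m ≤ x → (K x).card ≤ 1 := by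
    intro x hx
    rw [card_le_one]
    intro u hu v hv
    replace hu := (mem_filter.1 hu).2
    replace hv := (mem_filter.1 hv).2
    have hE : ∀ w, x ∈ φ w → x ∈ E w ∨ x ∈ E (w - 1) := fun w hw => by
      have := (hφ w).1 hw
      simp only [L, mem_union, mem_range] at this
      exact this.resolve_left (not_lt.2 hx)
    rcases hE u hu with h | h <;> rcases hE v hv with h' | h' <;> have h3 := hEE h h'
    · exact h3
    · rw [eq_sub_iff_add_eq] at h3
      exact absurd (h3 ▸ hv) (hind x u hu)
    · rw [sub_eq_iff_eq_add] at h3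
      exact absurd (h3 ▸ hu) (hind x v hv)
    · simpa using h3
  have hrange : ∀ v, φ v ⊆ range (m + (2 * p + 1) * d) := by
    intro v x hx
    have := (hφ v).1 hx
    simp only [L, mem_union, mem_range] at this ⊢
    rcases this with h | h | h
    · omega
    · exact (hEm h).2
    · exact (hEm h).2
  have hcount : ∑ v, (φ v).card = ∑ x ∈ range (m + (2 * p + 1) * d), (K x).card := by
    simp only [K, card_filter]
    rw [sum_comm]
    refine sum_congr rfl fun v _ => ?_
    rw [← card_filter, filter_mem_eq_inter, inter_eq_right.2 (hrange v)]
  have h1 : ∑ x ∈ range m, (K x).card ≤ m * p := by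
    simpa using sum_le_card_nsmul (range m) _ p fun x _ => hcommon x
  have h2 : ∑ x ∈ range ((2 * p + 1) * d), (K (m + x)).card ≤ (2 * p + 1) * d := by
    simpa using sum_le_card_nsmul (range ((2 * p + 1) * d)) _ 1
      fun x _ => hlocal (m + x) (Nat.le_add_right _ _)
  rw [sum_range_add, sum_congr rfl fun v _ => (hφ v).2] at hcount
  simp only [sum_const, card_univ, Fintype.card_fin, smul_eq_mul] at hcount
  have h3 : (2 * p + 1) * (p * α + 1 + d) = m * p + (2 * p + 1) * d + 1 := by
    simp only [m]
    ring
  omega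

theorem sep_odd_cycle_middle (b p α : ℕ) (hb : 1 ≤ b) (hp : 1 ≤ p) (hα : p * α ≤ b) :
    sep (cycleGraph (2 * p + 1)) (2 * b + α) b = b + (p + 1) * α := by
  refine IsGreatest.csSup_eq ⟨⟨?_, choosable_odd_cycle hp⟩, ?_⟩
  · linarith
  · rintro c ⟨hca, hc⟩
    by_contra! hlt
    have hmul : (p + 1) * α = p * α + α := by ring
    refine not_choosable_odd_cycle (b := b) (α := α) hp (by omega) fun L hL hsep => ?_
    exact hc L hL fun u v huv => (hsep u v huv).trans hlt
end

section
/- For all integers a ≥ b ≥ 1, n ≥ 4 and i ≥ 1, the free-separation numbers of cycles satisfy fsep(C_n, a, b) ≤ fsep(C_{n+i}, a, b). -/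
open SimpleGraph Finset

/-- `b`-subsets of `A` can be chosen to meet `S` as much as possible. -/
lemma exists_subset_card_eq_min_le_card_inter {A S : Finset ℕ} {b : ℕ} (h : b ≤ A.card) :
    ∃ X ⊆ A, X.card = b ∧ min b (A ∩ S).card ≤ (X ∩ S).card := by
  by_cases hb : b ≤ (A ∩ S).card
  · obtain ⟨X, hX, hc⟩ := Finset.exists_subset_card_eq hb
    refine ⟨X, hX.trans inter_subset_left, hc, ?_⟩
    rw [inter_eq_left.2 (hX.trans inter_subset_right), hc]
    exact min_le_left _ _
  · obtain ⟨X, hSX, hX, hc⟩ :=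
      Finset.exists_subsuperset_card_eq (inter_subset_left : A ∩ S ⊆ A) (by omega) h
    exact ⟨X, hX, hc, (min_le_right _ _).trans
      (card_le_card (subset_inter hSX inter_subset_right))⟩

/-- `Reach L b C k X`: the path on `0, …, k` has an `(L,b)`-coloring in which `0` receives `C`
and `k` receives `X`. -/
def Reach (L : ℕ → Finset ℕ) (b : ℕ) (C : Finset ℕ) : ℕ → Finset ℕ → Prop
  | 0, X => X = C
  | k + 1, X => X ⊆ L (k + 1) ∧ X.card = b ∧ ∃ Y, Reach L b C k Y ∧ Disjoint Y X

lemma Reach.subset_and_card {L : ℕ → Finset ℕ} {b : ℕ} {C : Finset ℕ} (hC : C ⊆ L 0)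
    (hCb : C.card = b) : ∀ {k : ℕ} {X : Finset ℕ}, Reach L b C k X → X ⊆ L k ∧ X.card = b
  | 0, _, h => by cases h; exact ⟨hC, hCb⟩
  | _ + 1, _, h => ⟨h.1, h.2.1⟩

lemma Reach.exists_coloring {L : ℕ → Finset ℕ} {b : ℕ} {C : Finset ℕ} (hC : C ⊆ L 0)
    (hCb : C.card = b) : ∀ {k : ℕ} {X : Finset ℕ}, Reach L b C k X →
      ∃ ψ : ℕ → Finset ℕ, ψ 0 = C ∧ ψ k = X ∧ (∀ j ≤ k, ψ j ⊆ L j ∧ (ψ j).card = b) ∧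
        ∀ j < k, Disjoint (ψ j) (ψ (j + 1))
  | 0, X, h => by
    cases h
    refine ⟨fun _ => C, rfl, rfl, fun j hj => ?_, fun j hj => by omega⟩
    obtain rfl : j = 0 := by omega
    exact ⟨hC, hCb⟩
  | k + 1, X, ⟨hX, hXb, Y, hY, hd⟩ => by
    obtain ⟨ψ, h0, hk, hl, ha⟩ := hY.exists_coloring hC hCb
    refine ⟨fun j => if j ≤ k then ψ j else X, by simpa using h0, by simp, fun j hj => ?_,
      fun j hj => ?_⟩
    · rcases Nat.lt_or_ge k j with h | h
      · obtain rfl : j = k + 1 := by omega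
        simpa using ⟨hX, hXb⟩
      · simpa [h] using hl j h
    · rcases Nat.lt_or_ge j k with h | h
      · have h1 : j ≤ k := by omega
        have h2 : j + 1 ≤ k := by omega
        simpa [h1, h2] using ha j h
      · obtain rfl : j = k := by omega
        simpa [hk] using hd

/-- Extending a path coloring by one vertex, using colors of `S` as much as possible. -/
lemma Reach.exists_succ {L : ℕ → Finset ℕ} {a b : ℕ} {C : Finset ℕ} {k : ℕ} {Y S : Finset ℕ}
    (hY : Reach L b C k Y) (ha : (L (k + 1)).card = a)
    (hYL : b + (Y ∩ L (k + 1)).card ≤ a) (hS : S ⊆ L (k + 1)) :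
    ∃ X, Reach L b C (k + 1) X ∧ min b (S \ Y).card ≤ (X ∩ S).card := by
  have h1 : b ≤ (L (k + 1) \ Y).card := by
    have := card_sdiff_add_card_inter (L (k + 1)) Y
    rw [inter_comm] at this
    omega
  obtain ⟨X, hX, hXb, hm⟩ := exists_subset_card_eq_min_le_card_inter (S := S) h1
  refine ⟨X, ⟨hX.trans sdiff_subset, hXb, Y, hY, ?_⟩, ?_⟩
  · exact (disjoint_of_subset_left hX sdiff_disjoint).symm
  · have : (L (k + 1) \ Y) ∩ S = S \ Y := by
      ext x
      have := @hS x
      simp only [mem_inter, mem_sdiff]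
      tauto
    rwa [this] at hm

/-- Greedy coloring of a closed walk with few colors common to consecutive lists. -/
lemma exists_reach_disjoint_of_separating {L : ℕ → Finset ℕ} {a b c t : ℕ} {C : Finset ℕ}
    {M : ℕ} (hM : 2 ≤ M) (hL : ∀ k, (L k).card = a) (hsep : ∀ k, (L k ∩ L (k + 1)).card ≤ c)
    (hclosed : L M = L 0) (hC : C ⊆ L 0) (hCb : C.card = b) (ht : a = b + c + t)
    (hm : b + min b c ≤ a) (h : 2 * min b c + b ≤ a + (M - 2) * t) :
    ∃ X, Reach L b C (M - 1) X ∧ Disjoint X C := by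
  have key : ∀ k, ∃ X, Reach L b C k X ∧ (X ∩ L (k + 1)).card ≤ min b c - k * t := by
    intro k
    induction k with
    | zero =>
      refine ⟨C, rfl, ?_⟩
      have h1 : (C ∩ L 1).card ≤ b := hCb ▸ card_le_card inter_subset_left
      have h2 : (C ∩ L 1).card ≤ c :=
        (card_le_card (inter_subset_inter_right hC)).trans (hsep 0)
      simpa using ⟨h1, h2⟩
    | succ k ih =>
      obtain ⟨Y, hY, hd⟩ := ih
      obtain ⟨X, hX, hXS⟩ := hY.exists_succ (S := L (k + 1) \ L (k + 2)) (hL _) (by omega)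
        sdiff_subset
      refine ⟨X, hX, ?_⟩
      have h1 : a ≤ ((L (k + 1) \ L (k + 2)) \ Y).card + c + (Y ∩ L (k + 1)).card := by
        have e : L (k + 1) ⊆ ((L (k + 1) \ L (k + 2)) \ Y) ∪ (L (k + 1) ∩ L (k + 2)) ∪
            (Y ∩ L (k + 1)) := by
          intro x hx
          simp only [mem_union, mem_sdiff, mem_inter]
          tauto
        have e1 := card_le_card e
        have e2 := card_union_le
          (((L (k + 1) \ L (k + 2)) \ Y) ∪ (L (k + 1) ∩ L (k + 2))) (Y ∩ L (k + 1))
        have e3 := card_union_le ((L (k + 1) \ L (k + 2)) \ Y) (L (k + 1) ∩ L (k + 2))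
        have e4 : (L (k + 1) ∩ L (k + 2)).card ≤ c := hsep (k + 1)
        rw [hL] at e1
        omega
      have h2 : (X ∩ (L (k + 1) \ L (k + 2))).card + (X ∩ L (k + 2)).card ≤ b := by
        rw [← hX.2.1, ← card_union_of_disjoint]
        · exact card_le_card (union_subset inter_subset_left inter_subset_left)
        · exact disjoint_of_subset_left inter_subset_right
            (disjoint_of_subset_right inter_subset_right sdiff_disjoint)
      have h3 : (k + 1) * t = k * t + t := by ring
      rw [h3]
      change (X ∩ L (k + 2)).card ≤ _
      omega
  obtain ⟨N, rfl⟩ : ∃ N, M = N + 2 := ⟨M - 2, by omega⟩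
  obtain ⟨Y, hY, hd⟩ := key N
  have hCM : (C ∩ L (N + 1)).card ≤ min b c := by
    refine le_min (hCb ▸ card_le_card inter_subset_left) (le_trans ?_ (hsep (N + 1)))
    rw [hclosed, inter_comm]
    exact card_le_card (inter_subset_inter_left hC)
  obtain ⟨X, hX, hXS⟩ := hY.exists_succ (S := L (N + 1) \ C) (hL _) (by omega) sdiff_subset
  refine ⟨X, hX, ?_⟩
  have h1 : a ≤ ((L (N + 1) \ C) \ Y).card + (C ∩ L (N + 1)).card + (Y ∩ L (N + 1)).card := by
    have e : L (N + 1) ⊆ ((L (N + 1) \ C) \ Y) ∪ (C ∩ L (N + 1)) ∪ (Y ∩ L (N + 1)) := by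
      intro x hx
      simp only [mem_union, mem_sdiff, mem_inter]
      tauto
    have e1 := card_le_card e
    have e2 := card_union_le (((L (N + 1) \ C) \ Y) ∪ (C ∩ L (N + 1))) (Y ∩ L (N + 1))
    have e3 := card_union_le ((L (N + 1) \ C) \ Y) (C ∩ L (N + 1))
    rw [hL] at e1
    omega
  simp only [Nat.add_sub_cancel] at h
  have h2 : X ∩ (L (N + 1) \ C) = X :=
    eq_of_subset_of_card_le inter_subset_left (by rw [hX.2.1]; omega)
  exact disjoint_of_subset_left (inter_eq_left.1 h2) sdiff_disjoint

/-- Extending a path coloring whose last color set meets `U`, a set disjoint from `S`. -/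
lemma Reach.exists_succ_of_disjoint {L : ℕ → Finset ℕ} {a b t : ℕ} {C : Finset ℕ} {k : ℕ}
    {Y S U : Finset ℕ} (hY : Reach L b C k Y) (hYb : Y.card = b) (hL : (L (k + 1)).card = a)
    (hba : 2 * b ≤ a) (hS : S ⊆ L (k + 1)) (hUS : Disjoint U S) (hYU : t ≤ (Y ∩ U).card) :
    ∃ X, Reach L b C (k + 1) X ∧ min b (S.card + t - b) ≤ (X ∩ S).card := by
  have h0 : (Y ∩ L (k + 1)).card ≤ b := hYb ▸ card_le_card inter_subset_left
  obtain ⟨X, hX, hXS⟩ := hY.exists_succ hL (by omega) hS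
  refine ⟨X, hX, le_trans ?_ hXS⟩
  have h1 : (Y ∩ U).card + (Y ∩ S).card ≤ b := by
    rw [← hYb, ← card_union_of_disjoint]
    · exact card_le_card (union_subset inter_subset_left inter_subset_left)
    · exact disjoint_of_subset_left inter_subset_right
        (disjoint_of_subset_right inter_subset_right hUS)
  have h2 := card_sdiff_add_card_inter S Y
  rw [inter_comm] at h2
  omega

lemma exists_subset_sdiff_card_eq {A S : Finset ℕ} {m : ℕ} (h : m + S.card ≤ A.card) :
    ∃ U ⊆ A, Disjoint U S ∧ U.card = m := by
  have := le_card_sdiff S A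
  obtain ⟨U, hU, hc⟩ := Finset.exists_subset_card_eq (s := A \ S) (n := m) (by omega)
  exact ⟨U, hU.trans sdiff_subset, disjoint_of_subset_left hU sdiff_disjoint, hc⟩

/-- Every two steps along the path, the coloring can be steered towards a prescribed target
by `e` further colors. -/
lemma exists_reach_card_inter {L : ℕ → Finset ℕ} {b e : ℕ} {C : Finset ℕ}
    (hL : ∀ k, (L k).card = 2 * b + e) (hC : C ⊆ L 0) (hCb : C.card = b) (k : ℕ) :
    (∀ T ⊆ L (2 * k), T.card = b →
      ∃ X, Reach L b C (2 * k) X ∧ min b (k * e) ≤ (X ∩ T).card) ∧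
    (∀ S ⊆ L (2 * k + 1), S.card = b + e →
      ∃ X, Reach L b C (2 * k + 1) X ∧ min b ((k + 1) * e) ≤ (X ∩ S).card) := by
  have odd_of_even : ∀ k, (∀ T ⊆ L (2 * k), T.card = b →
      ∃ X, Reach L b C (2 * k) X ∧ min b (k * e) ≤ (X ∩ T).card) →
      ∀ S ⊆ L (2 * k + 1), S.card = b + e →
      ∃ X, Reach L b C (2 * k + 1) X ∧ min b ((k + 1) * e) ≤ (X ∩ S).card := by
    intro k ih S hS hSc
    obtain ⟨T, hT, hTS, hTc⟩ := exists_subset_sdiff_card_eq (A := L (2 * k)) (S := S) (m := b)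
      (by rw [hL]; omega)
    obtain ⟨Y, hY, hYT⟩ := ih T hT hTc
    obtain ⟨X, hX, hXS⟩ := hY.exists_succ_of_disjoint (hY.subset_and_card hC hCb).2 (hL _)
      (by omega) hS hTS hYT
    refine ⟨X, hX, le_trans ?_ hXS⟩
    have : (k + 1) * e = k * e + e := by ring
    omega
  have even : ∀ T ⊆ L (2 * k), T.card = b →
      ∃ X, Reach L b C (2 * k) X ∧ min b (k * e) ≤ (X ∩ T).card := by
    induction k with
    | zero => exact fun T _ _ => ⟨C, rfl, by simp⟩
    | succ k ih =>
      intro T hT hTc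
      obtain ⟨S, hS, hST, hSc⟩ := exists_subset_sdiff_card_eq (A := L (2 * k + 1)) (S := T)
        (m := b + e) (by rw [hL]; omega)
      obtain ⟨Y, hY, hYS⟩ := odd_of_even k ih S hS hSc
      obtain ⟨X, hX, hXT⟩ := hY.exists_succ_of_disjoint (hY.subset_and_card hC hCb).2 (hL _)
        (by omega) hT hST hYS
      exact ⟨X, hX, le_trans (by omega) hXT⟩
  exact ⟨even, odd_of_even k even⟩

/-- Coloring of a closed walk with arbitrary lists of size `2 * b + e`. -/
lemma exists_reach_disjoint_of_two_mul_le {L : ℕ → Finset ℕ} {b e : ℕ} {C : Finset ℕ} {N : ℕ}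
    (hL : ∀ k, (L k).card = 2 * b + e) (hC : C ⊆ L 0) (hCb : C.card = b)
    (h : 2 * b ≤ N * e) : ∃ X, Reach L b C N X ∧ Disjoint X C := by
  have fin : ∀ X S : Finset ℕ, Reach L b C N X → Disjoint S C → b ≤ (X ∩ S).card →
      ∃ X, Reach L b C N X ∧ Disjoint X C := by
    intro X S hX hS hb
    have h2 : X ∩ S = X := eq_of_subset_of_card_le inter_subset_left
      (by rw [(hX.subset_and_card hC hCb).2]; omega)
    exact ⟨X, hX, disjoint_of_subset_left (inter_eq_left.1 h2) hS⟩
  obtain ⟨k, rfl | rfl⟩ := N.even_or_odd'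
  · obtain ⟨T, hT, hTC, hTc⟩ := exists_subset_sdiff_card_eq (A := L (2 * k)) (S := C) (m := b)
      (by rw [hL]; omega)
    obtain ⟨X, hX, hXT⟩ := (exists_reach_card_inter hL hC hCb k).1 T hT hTc
    rw [min_eq_left (by nlinarith)] at hXT
    exact fin X T hX hTC hXT
  · obtain ⟨S, hS, hSC, hSc⟩ := exists_subset_sdiff_card_eq (A := L (2 * k + 1)) (S := C)
      (m := b + e) (by rw [hL]; omega)
    obtain ⟨X, hX, hXS⟩ := (exists_reach_card_inter hL hC hCb k).2 S hS hSc
    rw [min_eq_left (by nlinarith)] at hXS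
    exact fin X S hX hSC hXS

/-- Free-choosability of a cycle from colorings of closed walks. -/
lemma freeChoosable_cycleGraph_of_reach {a b c N : ℕ} (hN : 1 ≤ N)
    (H : ∀ (L : ℕ → Finset ℕ) (C : Finset ℕ), (∀ k, (L k).card = a) →
      (∀ k, (L k ∩ L (k + 1)).card ≤ c) → L (N + 1) = L 0 → C ⊆ L 0 → C.card = b →
      ∃ X, Reach L b C N X ∧ Disjoint X C) :
    FreeChoosable (cycleGraph (N + 1)) a b c := by
  obtain ⟨m, rfl⟩ : ∃ m, N = m + 1 := ⟨N - 1, by omega⟩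
  intro L hL hsep v₀ C hC hCb
  have hadd : ∀ k : ℕ, Fin.ofNat (m + 1 + 1) (k + 1) = Fin.ofNat (m + 1 + 1) k + 1 := by
    intro k
    ext
    simp [Fin.val_add]
  obtain ⟨X, hX, hXC⟩ := H (fun k => L (v₀ + Fin.ofNat (m + 1 + 1) k)) C (fun k => hL _)
    (fun k => hsep _ _ (by
      rw [cycleGraph_adj, hadd]
      right
      abel)) (by simp) (by simpa using hC) hCb
  obtain ⟨ψ, h0, hk, hl, ha⟩ := hX.exists_coloring (by simpa using hC) hCb
  have hadj : ∀ u v : Fin (m + 1 + 1), v - u = 1 →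
      Disjoint (ψ (u - v₀).val) (ψ (v - v₀).val) := by
    intro u v huv
    have e : v - v₀ = (u - v₀) + 1 := by rw [← huv]; abel
    rw [e, Fin.val_add_one]
    split_ifs with hlast
    · rw [hlast, h0, Fin.val_last, hk]
      exact hXC
    · exact ha _ (by
        have := Fin.val_lt_last hlast
        simpa using this)
  refine ⟨fun v => ψ (v - v₀).val, ⟨fun v => ?_, fun u v huv => ?_⟩, by simpa using h0⟩
  · simpa using hl (v - v₀).val (by omega)
  · rw [← disjoint_iff_inter_eq_empty]
    rw [cycleGraph_adj] at huv
    rcases huv with h | h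
    · exact (hadj v u h).symm
    · exact hadj u v h

/-- The `i`-th block of `w` colors; blocks with distinct indices are disjoint. -/
def colorBlock (i w : ℕ) : Finset ℕ := (range w).image (Nat.pair i)

lemma mem_colorBlock {i w x : ℕ} :
    x ∈ colorBlock i w ↔ (Nat.unpair x).1 = i ∧ (Nat.unpair x).2 < w := by
  simp only [colorBlock, mem_image, mem_range]
  constructor
  · rintro ⟨k, hk, rfl⟩
    simpa using hk
  · rintro ⟨rfl, h⟩
    exact ⟨_, h, Nat.pair_unpair x⟩

lemma card_colorBlock (i w : ℕ) : (colorBlock i w).card = w := by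
  rw [colorBlock, card_image_of_injective, card_range]
  intro x y h
  simpa using h

lemma disjoint_colorBlock {i j v w : ℕ} (h : i ≠ j) :
    Disjoint (colorBlock i v) (colorBlock j w) := by
  rw [Finset.disjoint_left]
  intro x hx hy
  rw [mem_colorBlock] at hx hy
  exact h (hx.1.symm.trans hy.1)

/-- The colors shared along the edge from `j` to `j + 1` of the `n`-cycle; the last edge reuses
the colors of the first one. -/
def edgeBlock (n : ℕ) (w : ℕ → ℕ) (j : ℕ) : Finset ℕ :=
  colorBlock (if j + 1 = n then 0 else j) (w j)

/-- Lists on the `n`-cycle with `w j` colors shared along the edge from `j` to `j + 1`. -/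
def weightList (n a b : ℕ) (w : ℕ → ℕ) : ℕ → Finset ℕ
  | 0 => colorBlock 0 b ∪ colorBlock n (a - b)
  | j + 1 => edgeBlock n w j ∪ edgeBlock n w (j + 1) ∪
      colorBlock (n + (j + 1)) (a - w j - w (j + 1))

lemma card_weightList {n a b : ℕ} {w : ℕ → ℕ} (hn : 4 ≤ n) (hba : b ≤ a)
    (hw : ∀ j, j + 1 < n → w j + w (j + 1) ≤ a) {j : ℕ} (hj : j < n) :
    (weightList n a b w j).card = a := by
  cases j with
  | zero =>
    rw [weightList, card_union_of_disjoint (disjoint_colorBlock (by omega)), card_colorBlock,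
      card_colorBlock]
    omega
  | succ j =>
    have := hw j hj
    have h1 : Disjoint (edgeBlock n w j) (edgeBlock n w (j + 1)) :=
      disjoint_colorBlock (by split_ifs <;> omega)
    rw [weightList, card_union_of_disjoint, card_union_of_disjoint h1]
    · simp only [edgeBlock, card_colorBlock]
      omega
    · rw [disjoint_union_left]
      constructor <;> exact disjoint_colorBlock (by split_ifs <;> omega)

lemma weightList_inter_succ_subset {n a b : ℕ} {w : ℕ → ℕ} (hn : 4 ≤ n) {j : ℕ}
    (hj : j + 1 < n) : weightList n a b w j ∩ weightList n a b w (j + 1) ⊆ edgeBlock n w j := by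
  intro x hx
  cases j with
  | zero =>
    simp only [weightList, edgeBlock, mem_inter, mem_union, mem_colorBlock] at hx ⊢
    grind
  | succ j =>
    simp only [weightList, edgeBlock, mem_inter, mem_union, mem_colorBlock] at hx ⊢
    grind

lemma weightList_last_inter_zero_subset {n a b : ℕ} {w : ℕ → ℕ} (hn : 4 ≤ n) :
    weightList n a b w (n - 1) ∩ weightList n a b w 0 ⊆ edgeBlock n w (n - 1) := by
  obtain ⟨m, rfl⟩ : ∃ m, n = m + 2 := ⟨n - 2, by omega⟩
  intro x hx
  simp only [Nat.add_one_sub_one, weightList, edgeBlock, mem_inter, mem_union,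
    mem_colorBlock] at hx ⊢
  grind

/-- Consecutive vertices of a cycle, in terms of their values. -/
lemma cycleGraph_adj_val {n : ℕ} (hn : 4 ≤ n) {u v : Fin n} :
    (cycleGraph n).Adj u v ↔ u.val + 1 = v.val ∨ v.val + 1 = u.val ∨
      (u.val = n - 1 ∧ v.val = 0) ∨ (v.val = n - 1 ∧ u.val = 0) := by
  rw [cycleGraph_adj']
  have hu := u.isLt
  have hv := v.isLt
  rw [Fin.sub_def, Fin.sub_def]
  simp only
  have key : ∀ x y : ℕ, x < n → y < n →
      ((n - y + x) % n = 1 ↔ y + 1 = x ∨ (y = n - 1 ∧ x = 0)) := by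
    intro x y hx hy
    rcases Nat.lt_or_ge x y with h | h
    · rw [Nat.mod_eq_of_lt (by omega)]
      omega
    · rw [show n - y + x = x - y + n by omega, Nat.add_mod_right, Nat.mod_eq_of_lt (by omega)]
      omega
  rw [key _ _ hu hv, key _ _ hv hu]
  omega

/-- Numerical constraints on edge weights imposed by free-choosability of a cycle. -/
lemma FreeChoosable.sum_weights_le {n a b c : ℕ} (hn : 4 ≤ n) (hba : b ≤ a)
    (H : FreeChoosable (cycleGraph n) a b c) (w : ℕ → ℕ)
    (hwa : ∀ j, j + 1 < n → w j + w (j + 1) ≤ a)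
    (hwc : ∀ j < n, w j ≤ c) (h0 : w 0 ≤ b) (hlast : w (n - 1) ≤ b) :
    b + w 0 ≤ a ∧ (n - 1) * b + ∑ j ∈ range n, w j ≤ (n - 1) * a := by
  have hsep : ∀ j, j + 1 < n → (weightList n a b w j ∩ weightList n a b w (j + 1)).card ≤ c :=
    fun j hj => (card_le_card (weightList_inter_succ_subset hn hj)).trans
      ((card_colorBlock _ _).le.trans (hwc j (by omega)))
  have hsepl : (weightList n a b w (n - 1) ∩ weightList n a b w 0).card ≤ c :=
    (card_le_card (weightList_last_inter_zero_subset hn)).trans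
      ((card_colorBlock _ _).le.trans (hwc _ (by omega)))
  obtain ⟨φ, ⟨hφ, hφd⟩, hφ0⟩ := H (fun v => weightList n a b w v.val)
    (fun v => card_weightList hn hba hwa v.isLt)
    (fun u v huv => by
      rcases (cycleGraph_adj_val hn).1 huv with h | h | ⟨h, h'⟩ | ⟨h, h'⟩
      · simpa only [← h] using hsep u.val (by omega)
      · rw [inter_comm]
        simpa only [← h] using hsep v.val (by omega)
      · simpa only [h, h'] using hsepl
      · rw [inter_comm]
        simpa only [h, h'] using hsepl)
    ⟨0, by omega⟩ (colorBlock 0 b) subset_union_left (card_colorBlock _ _)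
  obtain ⟨ψ, hψ⟩ : ∃ ψ : ℕ → Finset ℕ, ∀ v : Fin n, ψ v.val = φ v :=
    ⟨fun k => if h : k < n then φ ⟨k, h⟩ else ∅, fun v => by simp⟩
  have hψ0 : ψ 0 = colorBlock 0 b := (hψ ⟨0, by omega⟩).trans hφ0
  have hψL : ∀ j < n, ψ j ⊆ weightList n a b w j ∧ (ψ j).card = b := fun j hj => by
    have := hφ ⟨j, hj⟩
    rwa [← hψ] at this
  have hψd : ∀ j, j + 1 < n → Disjoint (ψ j) (ψ (j + 1)) := fun j hj => by
    have := hφd ⟨j, by omega⟩ ⟨j + 1, hj⟩ ((cycleGraph_adj_val hn).2 (Or.inl rfl))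
    rwa [← hψ, ← hψ, ← disjoint_iff_inter_eq_empty] at this
  have hψl : Disjoint (ψ (n - 1)) (ψ 0) := by
    have := hφd ⟨n - 1, by omega⟩ ⟨0, by omega⟩ ((cycleGraph_adj_val hn).2 (by simp))
    rwa [← hψ, ← hψ, ← disjoint_iff_inter_eq_empty] at this
  have hvertex : ∀ j, j + 1 < n → b + w j + w (j + 1) ≤
      (ψ (j + 1) ∩ edgeBlock n w j).card + (ψ (j + 1) ∩ edgeBlock n w (j + 1)).card + a := by
    intro j hj
    obtain ⟨h1, h2⟩ := hψL (j + 1) hj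
    have h3 : ψ (j + 1) ⊆ (ψ (j + 1) ∩ edgeBlock n w j) ∪ (ψ (j + 1) ∩ edgeBlock n w (j + 1)) ∪
        colorBlock (n + (j + 1)) (a - w j - w (j + 1)) := by
      intro x hx
      have := h1 hx
      simp only [weightList, mem_union, mem_inter] at this ⊢
      tauto
    have h4 := card_le_card h3
    have h5 := card_union_le ((ψ (j + 1) ∩ edgeBlock n w j) ∪
      (ψ (j + 1) ∩ edgeBlock n w (j + 1))) (colorBlock (n + (j + 1)) (a - w j - w (j + 1)))
    have h6 := card_union_le (ψ (j + 1) ∩ edgeBlock n w j) (ψ (j + 1) ∩ edgeBlock n w (j + 1))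
    rw [card_colorBlock] at h5
    have := hwa j hj
    omega
  have hedge : ∀ j, j + 1 < n →
      (ψ j ∩ edgeBlock n w j).card + (ψ (j + 1) ∩ edgeBlock n w j).card ≤ w j := by
    intro j hj
    rw [← card_union_of_disjoint]
    · exact (card_le_card (union_subset inter_subset_right inter_subset_right)).trans
        (card_colorBlock _ _).le
    · exact disjoint_of_subset_left inter_subset_left
        (disjoint_of_subset_right inter_subset_left (hψd j hj))
  have hblock : ∀ j, w j ≤ b → (if j + 1 = n then 0 else j) = 0 → edgeBlock n w j ⊆ ψ 0 := by
    intro j hj hj' x hx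
    rw [edgeBlock, mem_colorBlock, hj'] at hx
    rw [hψ0, mem_colorBlock]
    exact ⟨hx.1, by omega⟩
  have hfirst : (ψ 1 ∩ edgeBlock n w 0).card = 0 := by
    rw [card_eq_zero, ← disjoint_iff_inter_eq_empty]
    exact disjoint_of_subset_right (hblock 0 h0 (by simp)) (hψd 0 (by omega)).symm
  have hend : (ψ (n - 1) ∩ edgeBlock n w (n - 1)).card = 0 := by
    rw [card_eq_zero, ← disjoint_iff_inter_eq_empty]
    exact disjoint_of_subset_right
      (hblock (n - 1) hlast (if_pos (by omega))) hψl
  have hsum : ∀ j, j + 1 < n → (j + 1) * b + ∑ i ∈ range (j + 2), w i ≤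
      (j + 1) * a + (ψ (j + 1) ∩ edgeBlock n w (j + 1)).card := by
    intro j
    induction j with
    | zero =>
      intro hj
      have := hvertex 0 hj
      simp only [sum_range_succ, range_zero, sum_empty]
      simp only [zero_add] at this ⊢
      omega
    | succ j ih =>
      intro hj
      have h1 := ih (by omega)
      have h2 := hvertex (j + 1) hj
      have h3 := hedge (j + 1) hj
      rw [sum_range_succ, add_mul (j + 1) 1 b, add_mul (j + 1) 1 a]
      have h4 : w (j + 1 + 1) = w (j + 2) := rfl
      omega
  constructor
  · have h1 := hvertex 0 (by omega)
    have h2 := hedge 1 (by omega)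
    simp only [zero_add] at h1
    omega
  · have := hsum (n - 2) (by omega)
    rwa [show n - 2 + 1 = n - 1 by omega, show n - 2 + 2 = n by omega, hend, add_zero] at this

/-- Sum of the weights `x, y, z, y, z, …`. -/
lemma two_mul_sum_alternating {x y z a : ℕ} (hyz : y + z = a) (hzy : z ≤ y) (n : ℕ) :
    2 * x + n * a ≤
      2 * ∑ j ∈ range (n + 1), (if j = 0 then x else if j % 2 = 1 then y else z) := by
  suffices h : ∀ n, (n % 2 = 0 → 2 * x + n * a ≤
      2 * ∑ j ∈ range (n + 1), (if j = 0 then x else if j % 2 = 1 then y else z)) ∧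
      (n % 2 = 1 → 2 * x + n * a + (y - z) ≤
      2 * ∑ j ∈ range (n + 1), (if j = 0 then x else if j % 2 = 1 then y else z)) by
    have := h n
    omega
  intro n
  induction n with
  | zero => simp
  | succ n ih =>
    rw [sum_range_succ, add_mul n 1 a, if_neg (Nat.succ_ne_zero n)]
    split_ifs <;> omega

lemma FreeChoosable.cycleGraph_add {a b c n i : ℕ} (hba : b ≤ a) (hn : 4 ≤ n) (hi : 1 ≤ i)
    (H : FreeChoosable (cycleGraph n) a b c) : FreeChoosable (cycleGraph (n + i)) a b c := by
  obtain ⟨p, rfl⟩ : ∃ p, n = p + 2 := ⟨n - 2, by omega⟩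
  have hm : b + min b c ≤ a :=
    (H.sum_weights_le hn hba (fun j => if j = 0 then min b c else 0)
      (fun j _ => by grind) (fun j _ => by grind) (by simp)
      (by simp)).1
  rw [show p + 2 + i = (p + i + 1) + 1 by ring]
  refine freeChoosable_cycleGraph_of_reach (by omega) fun L C hL hsep hclosed hC hCb => ?_
  by_cases hc : 2 * c ≤ a
  · have h := (H.sum_weights_le hn hba
      (fun j => if j = 0 then min b c else if j = p + 1 then min b c else c)
      (fun j _ => by grind) (fun j _ => by grind) (by simp)
      (by simp)).2
    have hs : ∑ j ∈ range p, (if j + 1 = p + 1 then min b c else c) = p * c := by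
      rw [sum_congr rfl (g := fun _ => c), sum_const, card_range, smul_eq_mul]
      intro j hj
      rw [mem_range] at hj
      rw [if_neg (by omega)]
    rw [sum_range_succ, sum_range_succ'] at h
    simp only [Nat.succ_ne_zero, if_false, if_true, hs] at h
    obtain ⟨t, ht⟩ : ∃ t, a = b + c + t := ⟨a - (b + c), by omega⟩
    refine exists_reach_disjoint_of_separating (by omega) hL hsep hclosed hC hCb ht hm ?_
    rw [show p + i + 1 + 1 - 2 = p + i by omega, add_mul]
    rw [show p + 2 - 1 = p + 1 by omega, ht] at h
    have : (p + 1) * (b + c + t) = (p + 1) * b + p * c + c + p * t + t := by ring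
    omega
  · obtain ⟨e, rfl⟩ : ∃ e, a = 2 * b + e := ⟨a - 2 * b, by omega⟩
    refine exists_reach_disjoint_of_two_mul_le hL hC hCb ?_
    have h := (H.sum_weights_le hn hba
      (fun j => if j = p + 1 then b else if j = 0 then b else
        if j % 2 = 1 then min c (b + e) else 2 * b + e - min c (b + e))
      (fun j _ => by grind) (fun j _ => by grind)
      (by split_ifs <;> omega) (by simp)).2
    have hs := two_mul_sum_alternating (x := b) (y := min c (b + e))
      (z := 2 * b + e - min c (b + e)) (a := 2 * b + e) (by omega) (by omega) p
    rw [sum_range_succ, sum_congr rfl (g := fun j => if j = 0 then b else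
        if j % 2 = 1 then min c (b + e) else 2 * b + e - min c (b + e))] at h
    · simp only [if_true] at h
      rw [show p + 2 - 1 = p + 1 by omega] at h
      have he : e ≤ i * e := Nat.le_mul_of_pos_left e hi
      linarith
    · intro j hj
      rw [mem_range] at hj
      rw [if_neg (by omega)]

theorem fsep_cycle_mono (a b n i : ℕ) (hb : 1 ≤ b) (hba : b ≤ a) (hn : 4 ≤ n)
    (hi : 1 ≤ i) :
    fsep (cycleGraph n) a b ≤ fsep (cycleGraph (n + i)) a b := by
  rcases Set.eq_empty_or_nonempty {c | c ≤ a ∧ FreeChoosable (cycleGraph n) a b c} with h | h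
  · simp [fsep, h]
  · exact csSup_le_csSup ⟨a, fun c hc => hc.1⟩ h
      fun c hc => ⟨hc.1, hc.2.cycleGraph_add hba hn hi⟩
end

section
/- For all integers a ≥ b ≥ 1 and every integer p ≥ 3, there exists a finite connected cactus G of girth p such that sep(G, a, b) = fsep(G, a, b). -/
open SimpleGraph Finset

/-- A cactus: a connected graph in which every edge belongs to at most one cycle
(any two cycles sharing an edge have the same edge set). -/
def IsCactus {V : Type*} (G : SimpleGraph V) : Prop :=
  G.Connected ∧ ∀ (u v : V) (p : G.Walk u u) (q : G.Walk v v),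
    p.IsCycle → q.IsCycle → (∃ e, e ∈ p.edges ∧ e ∈ q.edges) →
      ∀ e, e ∈ p.edges ↔ e ∈ q.edges

section Bouquet

variable {W ι : Type*} [DecidableEq W]

/-- The inclusion of the `i`-th petal of a bouquet of copies of `W` glued at `r`;
the common point is `none`. -/
def petal (r : W) (i : ι) (w : W) : Option (ι × {w : W // w ≠ r}) :=
  if h : w = r then none else some (i, ⟨w, h⟩)

@[simp]
lemma petal_root (r : W) (i : ι) : petal r i r = none := by simp [petal]

lemma petal_of_ne {r w : W} (i : ι) (h : w ≠ r) : petal r i w = some (i, ⟨w, h⟩) := by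
  simp [petal, h]

lemma eq_of_petal_eq {r u v : W} {i j : ι} (h : petal r i u = petal r j v) : u = v := by
  unfold petal at h
  split_ifs at h <;> simp_all

lemma index_eq_of_petal_eq {r u v : W} {i j : ι} (h : petal r i u = petal r j v) (hu : u ≠ r) :
    i = j := by
  have hv : v ≠ r := eq_of_petal_eq h ▸ hu
  simp_all [petal]

lemma petal_injective (r : W) (i : ι) : Function.Injective (petal r i) :=
  fun _ _ => eq_of_petal_eq

lemma exists_petal_eq [Nonempty ι] (r : W) (x : Option (ι × {w : W // w ≠ r})) :
    ∃ i w, petal r i w = x := by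
  rcases x with _ | ⟨i, w, hw⟩
  · exact ⟨Classical.arbitrary ι, r, petal_root r _⟩
  · exact ⟨i, w, petal_of_ne i hw⟩

/-- Copies of the graph `H`, indexed by `ι` and glued together at the vertex `r`. -/
def bouquet (H : SimpleGraph W) (r : W) (ι : Type*) :
    SimpleGraph (Option (ι × {w : W // w ≠ r})) where
  Adj x y := ∃ i u v, H.Adj u v ∧ petal r i u = x ∧ petal r i v = y
  symm := ⟨by
    rintro x y ⟨i, u, v, h, hu, hv⟩
    exact ⟨i, v, u, h.symm, hv, hu⟩⟩
  loopless := ⟨by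
    rintro x ⟨i, u, v, h, hu, hv⟩
    exact h.ne (eq_of_petal_eq (hu.trans hv.symm))⟩

variable {H : SimpleGraph W} {r : W}

lemma bouquet_adj_petal {u v : W} (i : ι) (h : H.Adj u v) :
    (bouquet H r ι).Adj (petal r i u) (petal r i v) :=
  ⟨i, u, v, h, rfl, rfl⟩

/-- The inclusion of a petal as a graph homomorphism. -/
def petalHom (H : SimpleGraph W) (r : W) (i : ι) : H →g bouquet H r ι where
  toFun := petal r i
  map_rel' := bouquet_adj_petal i

lemma bouquet_connected [Nonempty ι] (hH : H.Connected) : (bouquet H r ι).Connected := by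
  have key : ∀ x, (bouquet H r ι).Reachable none x := by
    intro x
    obtain ⟨i, w, rfl⟩ := exists_petal_eq r x
    have h := (hH.preconnected r w).map (petalHom H r i)
    rwa [show petalHom H r i r = none from petal_root r i] at h
  exact ⟨fun x y => (key x).symm.trans (key y)⟩

lemma FreeChoosable.bouquet [Nonempty ι] {a b c : ℕ} (h : FreeChoosable H a b c) :
    FreeChoosable (bouquet H r ι) a b c := by
  classical
  intro L hL hsep x C hC hCb
  obtain ⟨i, w, rfl⟩ := exists_petal_eq r x
  have ext : ∀ (j : ι) (w : W) (D : Finset ℕ), D ⊆ L (petal r j w) → D.card = b →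
      ∃ φ, IsLbColoring H (fun w => L (petal r j w)) b φ ∧ φ w = D := fun j w D hD hDb =>
    h _ (fun _ => hL _) (fun u v huv => hsep _ _ (bouquet_adj_petal j huv)) w D hD hDb
  obtain ⟨φ₀, hφ₀, hφ₀w⟩ := ext i w C hC hCb
  have hroot : ∀ j, φ₀ r ⊆ L (petal r j r) := fun j => by
    simpa only [petal_root] using (hφ₀.1 r).1
  have hψ : ∀ j, ∃ ψ, IsLbColoring H (fun w => L (petal r j w)) b ψ ∧ ψ r = φ₀ r ∧
      (j = i → ψ = φ₀) := by
    intro j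
    by_cases hj : j = i
    · subst hj
      exact ⟨φ₀, hφ₀, rfl, fun _ => rfl⟩
    · obtain ⟨ψ, h₁, h₂⟩ := ext j r (φ₀ r) (hroot j) (hφ₀.1 r).2
      exact ⟨ψ, h₁, h₂, fun e => absurd e hj⟩
  choose ψ hψ hψr hψi using hψ
  let φ : Option (ι × {w : W // w ≠ r}) → Finset ℕ := fun x =>
    x.elim (φ₀ r) fun y => ψ y.1 y.2
  have hφ : ∀ j u, φ (petal r j u) = ψ j u := by
    intro j u
    by_cases hu : u = r
    · subst hu
      simp [φ, hψr]
    · simp [φ, petal_of_ne j hu]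
  refine ⟨φ, ⟨fun x => ?_, ?_⟩, ?_⟩
  · obtain ⟨j, u, rfl⟩ := exists_petal_eq r x
    rw [hφ]
    exact (hψ j).1 u
  · rintro x y ⟨j, u, v, huv, rfl, rfl⟩
    rw [hφ, hφ]
    exact (hψ j).2 u v huv
  · rw [hφ, hψi i rfl, hφ₀w]

end Bouquet

/-- A permutation preserving a finite set `S` can move any subset of `S` to any other subset
of `S` of the same size. -/
lemma Finset.exists_perm_map_eq {α : Type*} [DecidableEq α] {S C D : Finset α} (hC : C ⊆ S)
    (hD : D ⊆ S) (h : C.card = D.card) :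
    ∃ σ : Equiv.Perm α, S.map σ.toEmbedding = S ∧ C.map σ.toEmbedding = D := by
  have hcard : ∀ T ⊆ S, Fintype.card {x : S // x.1 ∈ T} = T.card := by
    intro T hT
    rw [← Fintype.card_coe T]
    exact Fintype.card_congr
      ⟨fun x => ⟨x.1.1, x.2⟩, fun x => ⟨⟨x.1, hT x.2⟩, x.2⟩, fun _ => rfl, fun _ => rfl⟩
  let e : {x : S // x.1 ∈ C} ≃ {x : S // x.1 ∈ D} :=
    Fintype.equivOfCardEq (by rw [hcard C hC, hcard D hD, h])
  let τ : Equiv.Perm S := e.extendSubtype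
  let σ : Equiv.Perm α := Equiv.Perm.ofSubtype τ
  have hσ : ∀ x (hx : x ∈ S), σ x = τ ⟨x, hx⟩ := fun x hx =>
    Equiv.Perm.ofSubtype_apply_of_mem τ hx
  refine ⟨σ, ?_, ?_⟩
  · refine Finset.eq_of_subset_of_card_le (fun y hy => ?_) (by simp)
    obtain ⟨x, hx, rfl⟩ := Finset.mem_map.1 hy
    change σ x ∈ S
    rw [hσ x hx]
    exact (τ _).2
  · refine Finset.eq_of_subset_of_card_le (fun y hy => ?_) (by simp [h])
    obtain ⟨x, hx, rfl⟩ := Finset.mem_map.1 hy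
    change σ x ∈ D
    rw [hσ x (hC hx)]
    exact e.extendSubtype_mem ⟨x, hC hx⟩ hx

lemma FreeChoosable.choosable {V : Type*} [Nonempty V] {G : SimpleGraph V} {a b c : ℕ}
    (hba : b ≤ a) (h : FreeChoosable G a b c) : Choosable G a b c := by
  intro L hL hsep
  obtain ⟨C, hC, hCb⟩ := Finset.exists_subset_card_eq (hba.trans (hL (Classical.arbitrary V)).ge)
  obtain ⟨φ, hφ, -⟩ := h L hL hsep _ C hC hCb
  exact ⟨φ, hφ⟩

/-- If a bouquet with one petal for each `b`-subset of an `a`-set is choosable, then any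
precoloring of the root of a single petal extends. -/
lemma Choosable.exists_coloring_of_bouquet {W : Type*} [DecidableEq W] {H : SimpleGraph W}
    {r : W} {a b c : ℕ} (h : Choosable (bouquet H r (Fin (a.choose b))) a b c)
    {L : W → Finset ℕ} (hL : ∀ v, (L v).card = a)
    (hsep : ∀ u v, H.Adj u v → (L u ∩ L v).card ≤ c) {C : Finset ℕ} (hC : C ⊆ L r)
    (hCb : C.card = b) : ∃ φ, IsLbColoring H L b φ ∧ φ r = C := by
  have hcard : ((L r).powersetCard b).card = a.choose b := by
    rw [Finset.card_powersetCard, hL]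
  let e := Finset.equivFinOfCardEq hcard
  have hσ : ∀ j, ∃ σ : Equiv.Perm ℕ, (L r).map σ.toEmbedding = L r ∧
      C.map σ.toEmbedding = (e.symm j).1 := by
    intro j
    have hj := Finset.mem_powersetCard.1 (e.symm j).2
    exact Finset.exists_perm_map_eq hC hj.1 (hCb.trans hj.2.symm)
  choose σ hσS hσC using hσ
  let L' : Option (Fin (a.choose b) × {w : W // w ≠ r}) → Finset ℕ := fun x =>
    x.elim (L r) fun y => (L y.2).map (σ y.1).toEmbedding
  have hL' : ∀ j u, L' (petal r j u) = (L u).map (σ j).toEmbedding := by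
    intro j u
    by_cases hu : u = r
    · subst hu
      simp [L', hσS]
    · simp [L', petal_of_ne j hu]
  obtain ⟨φ, hφ, hφadj⟩ := h L' (by rintro (_ | y) <;> simp [L', hL]) (by
    rintro x y ⟨j, u, v, huv, rfl, rfl⟩
    rw [hL', hL', ← Finset.map_inter, Finset.card_map]
    exact hsep u v huv)
  have hroot : φ none ∈ (L r).powersetCard b := Finset.mem_powersetCard.2 (hφ none)
  let j := e ⟨φ none, hroot⟩
  have hj : (C.map (σ j).toEmbedding) = φ none := by simp [hσC, j]
  refine ⟨fun u => (φ (petal r j u)).map (σ j).symm.toEmbedding,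
    ⟨fun u => ⟨?_, ?_⟩, fun u v huv => ?_⟩, ?_⟩
  · have := (hφ (petal r j u)).1
    rw [hL'] at this
    refine (Finset.map_subset_map.2 this).trans ?_
    simp [Finset.map_map]
  · rw [Finset.card_map, (hφ _).2]
  · rw [← Finset.map_inter, hφadj _ _ (bouquet_adj_petal j huv), Finset.map_empty]
  · simp [← hj, Finset.map_map]

lemma freeChoosable_cycleGraph_of_bouquet {n a b c : ℕ}
    (h : Choosable (bouquet (cycleGraph (n + 3)) 0 (Fin (a.choose b))) a b c) :
    FreeChoosable (cycleGraph (n + 3)) a b c := by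
  intro L hL hsep v C hC hCb
  have hrot : ∀ x y d : Fin (n + 3),
      (cycleGraph (n + 3)).Adj x y → (cycleGraph (n + 3)).Adj (x + d) (y + d) := by
    intro x y d hxy
    simpa [cycleGraph_adj] using hxy
  obtain ⟨φ, hφ, hφr⟩ := h.exists_coloring_of_bouquet (L := fun u => L (u + v))
    (fun _ => hL _) (fun x y hxy => hsep _ _ (hrot x y v hxy)) (C := C) (by simpa using hC) hCb
  refine ⟨fun u => φ (u - v), ⟨fun u => ?_, fun x y hxy => hφ.2 _ _ ?_⟩, by simpa using hφr⟩
  · simpa using hφ.1 (u - v)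
  · simpa [sub_eq_add_neg] using hrot x y (-v) hxy

section Cycles

variable {n : ℕ} {ι : Type*}

/-- Away from the center, a bouquet of cycles has only the two evident neighbors. -/
lemma bouquet_cycleGraph_adj_petal {i : ι} {k : Fin (n + 3)} (hk : k ≠ 0)
    {x : Option (ι × {w : Fin (n + 3) // w ≠ 0})}
    (h : (bouquet (cycleGraph (n + 3)) 0 ι).Adj (petal 0 i k) x) :
    x = petal 0 i (k - 1) ∨ x = petal 0 i (k + 1) := by
  obtain ⟨j, u, v, huv, hu, rfl⟩ := h
  obtain rfl := index_eq_of_petal_eq hu.symm hk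
  obtain rfl := eq_of_petal_eq hu
  rcases cycleGraph_adj.1 huv with h | h
  · left; rw [← h]; simp
  · right; rw [← h]; simp

variable {x : Option (ι × {w : Fin (n + 3) // w ≠ 0})}
  {w : (bouquet (cycleGraph (n + 3)) 0 ι).Walk x x}

/-- A cycle through a noncentral vertex uses both edges at that vertex. -/
lemma SimpleGraph.Walk.IsCycle.adj_petal (hw : w.IsCycle) {i : ι} {k : Fin (n + 3)} (hk : k ≠ 0)
    (hmem : petal 0 i k ∈ w.support) :
    w.toSubgraph.Adj (petal 0 i k) (petal 0 i (k - 1)) ∧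
      w.toSubgraph.Adj (petal 0 i k) (petal 0 i (k + 1)) := by
  have hsub : w.toSubgraph.neighborSet (petal 0 i k) ⊆
      {petal 0 i (k - 1), petal 0 i (k + 1)} := fun y hy =>
    bouquet_cycleGraph_adj_petal hk (w.toSubgraph.adj_sub hy)
  have heq := Set.eq_of_subset_of_ncard_le hsub
    ((Set.ncard_insert_le _ _).trans (by
      rw [Set.ncard_singleton, hw.ncard_neighborSet_toSubgraph_eq_two hmem]))
    (Set.toFinite _)
  constructor
  · change _ ∈ w.toSubgraph.neighborSet _
    rw [heq]; simp
  · change _ ∈ w.toSubgraph.neighborSet _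
    rw [heq]; simp

/-- A cycle meeting a petal in a noncentral vertex contains the whole petal. -/
lemma SimpleGraph.Walk.IsCycle.adj_petal_add_one (hw : w.IsCycle) {i : ι} {k : Fin (n + 3)}
    (hk : k ≠ 0) (hmem : petal 0 i k ∈ w.support) (l : Fin (n + 3)) :
    w.toSubgraph.Adj (petal 0 i l) (petal 0 i (l + 1)) := by
  have step : ∀ m : Fin (n + 2),
      (w.toSubgraph.Adj (petal 0 i m.castSucc) (petal 0 i (m.castSucc + 1)) ↔
        w.toSubgraph.Adj (petal 0 i m.succ) (petal 0 i (m.succ + 1))) := by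
    intro m
    rw [Fin.coeSucc_eq_succ]
    constructor
    · intro h
      exact (hw.adj_petal m.succ_ne_zero
        (w.mem_verts_toSubgraph.1 (w.toSubgraph.edge_vert h.symm))).2
    · intro h
      have := (hw.adj_petal m.succ_ne_zero
        (w.mem_verts_toSubgraph.1 (w.toSubgraph.edge_vert h))).1
      rw [← Fin.coeSucc_eq_succ, add_sub_cancel_right] at this
      rw [← Fin.coeSucc_eq_succ]
      exact this.symm
  have all : ∀ m : Fin (n + 3),
      (w.toSubgraph.Adj (petal 0 i m) (petal 0 i (m + 1)) ↔
        w.toSubgraph.Adj (petal 0 i (0 : Fin (n + 3))) (petal 0 i ((0 : Fin (n + 3)) + 1))) := by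
    intro m
    induction m using Fin.induction with
    | zero => rfl
    | succ m ih => exact (step m).symm.trans ih
  exact (all l).2 ((all k).1 (hw.adj_petal hk hmem).2)

/-- A cycle in a bouquet of cycles consists of exactly one petal. -/
lemma SimpleGraph.Walk.IsCycle.mem_edges_bouquet_iff (hw : w.IsCycle) {i : ι} {k : Fin (n + 3)}
    (hk : k ≠ 0) (hmem : petal 0 i k ∈ w.support) (e : Sym2 _) :
    e ∈ w.edges ↔ ∃ l, e = s(petal 0 i l, petal 0 i (l + 1)) := by
  constructor
  · intro he
    have hadj : ∀ {j l}, petal 0 j l ∈ w.support → l ≠ 0 → j = i := by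
      intro j l hl hl0
      by_contra hne
      have h1 := (hw.adj_petal_add_one hk hmem 0)
      have h2 := (hw.adj_petal_add_one hk hmem (-1)).symm
      have h3 := (hw.adj_petal_add_one hl0 hl 0)
      rw [neg_add_cancel] at h2
      simp only [petal_root, zero_add] at h1 h2 h3
      have hc := hw.ncard_neighborSet_toSubgraph_eq_two
        ((w.mem_verts_toSubgraph).1 (w.toSubgraph.edge_vert h1))
      have hone : (1 : Fin (n + 3)) ≠ 0 := by simp
      have hneg : (1 : Fin (n + 3)) ≠ -1 := by
        intro h
        have := congrArg Fin.val h
        simp [Fin.val_neg] at this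
      have hsub : ({petal 0 i 1, petal 0 i (-1), petal 0 j 1} : Set _) ⊆
          w.toSubgraph.neighborSet none := by
        rintro y (rfl | rfl | rfl)
        exacts [h1, h2, h3]
      have hle := Set.ncard_le_ncard hsub (Set.finite_of_ncard_ne_zero (by omega))
      rw [hc, Set.ncard_eq_three.2 ⟨_, _, _, fun h => hneg (eq_of_petal_eq h),
        fun h => hne (index_eq_of_petal_eq h hone).symm,
        fun h => hne (index_eq_of_petal_eq h.symm hone), rfl⟩] at hle
      omega
    have hG := w.edges_subset_edgeSet he
    induction e with
    | _ x y =>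
      obtain ⟨j, u, v, huv, rfl, rfl⟩ := hG
      have hji : j = i := by
        by_cases hu : u = 0
        · exact hadj (w.snd_mem_support_of_mem_edges he) fun hv => huv.ne (hu.trans hv.symm)
        · exact hadj (w.fst_mem_support_of_mem_edges he) hu
      subst hji
      rcases cycleGraph_adj.1 huv with h | h
      · exact ⟨v, by rw [← h, add_sub_cancel, Sym2.eq_swap]⟩
      · exact ⟨u, by rw [← h, add_sub_cancel]⟩
  · rintro ⟨l, rfl⟩
    exact Walk.adj_toSubgraph_iff_mem_edges.1 (hw.adj_petal_add_one hk hmem l)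

lemma exists_petal_mem_of_mem_edges {x y : Option (ι × {w : Fin (n + 3) // w ≠ 0})}
    (w : (bouquet (cycleGraph (n + 3)) 0 ι).Walk x y) {e : Sym2 _} (he : e ∈ w.edges) :
    ∃ (i : ι) (k : Fin (n + 3)), k ≠ 0 ∧ petal 0 i k ∈ e := by
  have hG := w.edges_subset_edgeSet he
  induction e with
  | _ x y =>
    obtain ⟨i, u, v, huv, rfl, rfl⟩ := hG
    by_cases hu : u = 0
    · exact ⟨i, v, fun hv => huv.ne (hu.trans hv.symm), by simp⟩
    · exact ⟨i, u, hu, by simp⟩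

lemma isCactus_bouquet_cycleGraph [Nonempty ι] :
    IsCactus (bouquet (cycleGraph (n + 3)) 0 ι) := by
  refine ⟨bouquet_connected cycleGraph_connected, ?_⟩
  rintro u v p q hp hq ⟨e, hep, heq⟩ e'
  obtain ⟨i, k, hk, hmem⟩ := exists_petal_mem_of_mem_edges p hep
  rw [hp.mem_edges_bouquet_iff hk (p.mem_support_of_mem_edges hep hmem),
    hq.mem_edges_bouquet_iff hk (q.mem_support_of_mem_edges heq hmem)]

lemma egirth_bouquet_cycleGraph [Nonempty ι] :
    (bouquet (cycleGraph (n + 3)) 0 ι).egirth = ((n + 3 : ℕ) : ℕ∞) := by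
  apply le_antisymm
  · have hc := (cycleGraph.isCycle_cycle (n := n)).map
      (f := petalHom (cycleGraph (n + 3)) 0 (Classical.arbitrary ι)) (petal_injective 0 _)
    simpa [cycleGraph.length_cycle] using egirth_le_length hc
  · classical
    rw [le_egirth]
    intro x w hw
    obtain ⟨e, he⟩ := List.exists_mem_of_ne_nil w.edges fun h =>
      hw.not_nil (Walk.edges_eq_nil.1 h)
    obtain ⟨i, k, hk, hmem⟩ := exists_petal_mem_of_mem_edges w he
    have hall := hw.adj_petal_add_one hk (w.mem_support_of_mem_edges he hmem)
    have hsub : Finset.univ.image (petal (0 : Fin (n + 3)) i) ⊆ w.support.tail.toFinset := by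
      intro y hy
      obtain ⟨l, -, rfl⟩ := Finset.mem_image.1 hy
      rw [List.mem_toFinset]
      have hl := w.mem_verts_toSubgraph.1 (w.toSubgraph.edge_vert (hall l))
      rcases (Walk.mem_support_iff w).1 hl with h | h
      · rw [h]
        exact Walk.end_mem_tail_support hw.not_nil
      · exact h
    have h1 := (Finset.card_le_card hsub).trans (List.toFinset_card_le _)
    rw [Finset.card_image_of_injective _ (petal_injective 0 i)] at h1
    rw [Nat.cast_le]
    simpa using h1

end Cycles

theorem exists_cactus_sep_eq_fsep (a b p : ℕ) (hb : 1 ≤ b) (hba : b ≤ a)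
    (hp : 3 ≤ p) :
    ∃ (V : Type) (_ : Fintype V) (G : SimpleGraph V),
      IsCactus G ∧ G.egirth = (p : ℕ∞) ∧ sep G a b = fsep G a b := by
  obtain ⟨n, rfl⟩ := Nat.exists_eq_add_of_le' hp
  have : Nonempty (Fin (a.choose b)) := Fin.pos_iff_nonempty.1 (Nat.choose_pos hba)
  refine ⟨_, inferInstance, bouquet (cycleGraph (n + 3)) 0 (Fin (a.choose b)),
    isCactus_bouquet_cycleGraph, egirth_bouquet_cycleGraph, ?_⟩
  unfold sep fsep
  congr 1
  ext c
  exact and_congr_right fun _ =>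
    ⟨fun h => (freeChoosable_cycleGraph_of_bouquet h).bouquet, fun h => h.choosable hba⟩
end
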